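/- Let β be a dimension vector of Q and σ ∈ ℤ^{Q_0} an integral weight. Then there exists a σ-semi-stable representation of Q of dimension vector β if and only if σ(β)=0 and σ(β')≤0 for every dimension vector β' with β' ↪ β. -/

import Mathlib

set_option autoImplicit false

noncomputable section

open scoped BigOperators

/-! Basic setup for representations of a quiver with vertex set `V`, arrow set `A`,
tail map `t` and head map `h`, over a field `K`. -/

variable (K : Type) [Field K]
variable {V A : Type} [Fintype V] [DecidableEq V] [Fintype A]

/-- The Euler form of the quiver `(V, A, t, h)`. -/
def eulerForm {R : Type} [CommRing R] (t h : A → V) (x y : V → R) : R :=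
  ∑ i, x i * y i - ∑ a, x (t a) * y (h a)

def natZ (x : V → ℕ) : V → ℤ := fun i => (x i : ℤ)
def intQ (x : V → ℤ) : V → ℚ := fun i => (x i : ℚ)
def natQ (x : V → ℕ) : V → ℚ := fun i => (x i : ℚ)

/-- The weight `⟨α,·⟩`. -/
def weightL (t h : A → V) (α : V → ℤ) : V → ℤ :=
  fun i => eulerForm t h α (fun j => if j = i then 1 else 0)

/-- The weight `−⟨·,α⟩`. -/
def weightR (t h : A → V) (α : V → ℤ) : V → ℤ :=
  fun i => - eulerForm t h (fun j => if j = i then 1 else 0) α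

/-- `IsPathFrom t h i p j` : the list of arrows `p` is a path from `i` to `j`. -/
def IsPathFrom (t h : A → V) : V → List A → V → Prop
  | i, [], j => i = j
  | i, a :: p, j => t a = i ∧ IsPathFrom t h (h a) p j

/-- The quiver has no (nontrivial) oriented cycles. -/
def Acyclic (t h : A → V) : Prop := ∀ (i : V) (p : List A), IsPathFrom t h i p i → p = []

/-- The dimension vector `γ_i` of the projective indecomposable at `i`:
`γ_i(j)` is the number of paths from `i` to `j`. -/
def gammaRoot (t h : A → V) (i : V) : V → ℕ :=
  fun j => Set.ncard {p : List A | IsPathFrom t h i p j}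

/-- A finite-dimensional representation of the quiver `(V, A, t, h)` over `K`. -/
structure QuivRep (K : Type) [Field K] (V A : Type) (t h : A → V) : Type 1 where
  sp : V → Type
  [inst1 : ∀ i, AddCommGroup (sp i)]
  [inst2 : ∀ i, Module K (sp i)]
  [inst3 : ∀ i, FiniteDimensional K (sp i)]
  map : ∀ a : A, sp (t a) →ₗ[K] sp (h a)

attribute [instance] QuivRep.inst1 QuivRep.inst2 QuivRep.inst3

namespace QuivRep

variable {K} {t h : A → V}

/-- The dimension vector of a representation. -/
def dimVec (X : QuivRep K V A t h) : V → ℕ := fun i => Module.finrank K (X.sp i)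

/-- A subrepresentation. -/
structure Sub (X : QuivRep K V A t h) where
  sub : ∀ i, Submodule K (X.sp i)
  le : ∀ a : A, ∀ x ∈ sub (t a), X.map a x ∈ sub (h a)

/-- The dimension vector of a subrepresentation. -/
def Sub.dimVec {X : QuivRep K V A t h} (U : Sub X) : V → ℕ :=
  fun i => Module.finrank K (U.sub i)

/-- The space `Hom_Q(X,Y)` of morphisms of representations, as a submodule of
`Π i, Hom_K(X(i),Y(i))`. -/
def homS (X Y : QuivRep K V A t h) : Submodule K (∀ i, X.sp i →ₗ[K] Y.sp i) where
  carrier := {φ | ∀ a : A, (φ (h a)).comp (X.map a) = (Y.map a).comp (φ (t a))}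
  zero_mem' := by intro a; simp
  add_mem' := by
    intro f g hf hg a
    simp only [Pi.add_apply, LinearMap.add_comp, LinearMap.comp_add, hf a, hg a]
  smul_mem' := by
    intro c f hf a
    simp only [Pi.smul_apply, LinearMap.smul_comp, LinearMap.comp_smul, hf a]

/-- The dimension of `Hom_Q(X,Y)`. -/
def homDim (X Y : QuivRep K V A t h) : ℕ := Module.finrank K (homS X Y)

/-- The map `d^X_Y` from Ringel's canonical exact sequence. -/
def dmap (X Y : QuivRep K V A t h) :
    (∀ i, X.sp i →ₗ[K] Y.sp i) →ₗ[K] (∀ a : A, X.sp (t a) →ₗ[K] Y.sp (h a)) where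
  toFun φ := fun a => (φ (h a)).comp (X.map a) - (Y.map a).comp (φ (t a))
  map_add' f g := by
    funext a
    simp only [Pi.add_apply, LinearMap.add_comp, LinearMap.comp_add]
    abel
  map_smul' c f := by
    funext a
    simp only [Pi.smul_apply, LinearMap.smul_comp, LinearMap.comp_smul, smul_sub,
      RingHom.id_apply]

/-- The dimension of `Ext^1_Q(X,Y)`, i.e. of the cokernel of `d^X_Y`. -/
def extDim (X Y : QuivRep K V A t h) : ℕ :=
  Module.finrank K ((∀ a : A, X.sp (t a) →ₗ[K] Y.sp (h a)) ⧸ LinearMap.range (dmap X Y))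

/-- A rigid representation: `Ext^1_Q(X,X) = 0`. -/
def IsRigid (X : QuivRep K V A t h) : Prop := extDim X X = 0

/-- A Schur representation: `End_Q(X) = K·id`. -/
def IsSchur (X : QuivRep K V A t h) : Prop := homDim X X = 1

/-- An exceptional representation: rigid and Schur. -/
def IsExceptional (X : QuivRep K V A t h) : Prop := IsRigid X ∧ IsSchur X

end QuivRep

/-- `β` is a real Schur root: the dimension vector of an exceptional representation. -/
def isRealSchurRoot (t h : A → V) (β : V → ℕ) : Prop :=
  ∃ X : QuivRep K V A t h, X.dimVec = β ∧ X.IsExceptional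

/-- `ext_Q(α,β)` : the generic (minimal) value of `dim Ext^1_Q` on pairs of
representations of dimension vectors `α`, `β`. -/
def extMin (t h : A → V) (α β : V → ℕ) : ℕ :=
  sInf {n | ∃ X Y : QuivRep K V A t h, X.dimVec = α ∧ Y.dimVec = β ∧ QuivRep.extDim X Y = n}

/-- `hom_Q(α,β)` : the generic (minimal) value of `dim Hom_Q`. -/
def homMin (t h : A → V) (α β : V → ℕ) : ℕ :=
  sInf {n | ∃ X Y : QuivRep K V A t h, X.dimVec = α ∧ Y.dimVec = β ∧ QuivRep.homDim X Y = n}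

/-- `β' ↪ β` : every representation of dimension vector `β` has a subrepresentation of
dimension vector `β'`. -/
def Embeds (t h : A → V) (β' β : V → ℕ) : Prop :=
  ∀ X : QuivRep K V A t h, X.dimVec = β → ∃ U : QuivRep.Sub X, U.dimVec = β'

/-- `σ`-semi-stability of a representation. -/
def IsSemistable {t h : A → V} (σ : V → ℤ) (X : QuivRep K V A t h) : Prop :=
  (∑ i, σ i * (X.dimVec i : ℤ)) = 0 ∧
  ∀ U : QuivRep.Sub X, (∑ i, σ i * (U.dimVec i : ℤ)) ≤ 0

/-- `σ`-stability of a representation. -/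
def IsStable {t h : A → V} (σ : V → ℤ) (X : QuivRep K V A t h) : Prop :=
  (∑ i, σ i * (X.dimVec i : ℤ)) = 0 ∧ X.dimVec ≠ (fun _ => 0) ∧
  ∀ U : QuivRep.Sub X, U.dimVec ≠ (fun _ => 0) → U.dimVec ≠ X.dimVec →
    (∑ i, σ i * (U.dimVec i : ℤ)) < 0

/-- Isomorphism of representations. -/
def RepIso {t h : A → V} (X Y : QuivRep K V A t h) : Prop :=
  ∃ e : ∀ i, X.sp i ≃ₗ[K] Y.sp i,
    ∀ (a : A) (x : X.sp (t a)), e (h a) (X.map a x) = Y.map a (e (t a) x)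

/-- A quiver exceptional sequence of dimension vectors. -/
def IsQES (t h : A → V) {l : ℕ} (b : Fin l → V → ℕ) : Prop :=
  (∀ j, isRealSchurRoot K t h (b j)) ∧
  ∀ i j : Fin l, i < j →
    homMin K t h (b i) (b j) = 0 ∧ extMin K t h (b i) (b j) = 0 ∧
      eulerForm t h (natZ (b j)) (natZ (b i)) ≤ 0

/-- The cone of nonnegative rational linear combinations of a finite set of integral
vectors. -/
def coneOf (C : Finset (V → ℤ)) : Set (V → ℚ) :=
  {x | ∃ lam : (V → ℤ) → ℚ, (∀ c, 0 ≤ lam c) ∧ x = ∑ c ∈ C, lam c • intQ c}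

/-- A compatible subset of the set `Ψ(Q)_{≥ -1}` of almost positive real Schur roots. -/
def IsCompatible (t h : A → V) (C : Finset (V → ℤ)) : Prop :=
  (∀ x ∈ C, (∃ β : V → ℕ, isRealSchurRoot K t h β ∧ x = natZ β) ∨
      (∃ i : V, x = fun j => -(gammaRoot t h i j : ℤ))) ∧
  (∀ x ∈ C, ∀ y ∈ C, x ≠ y →
    (∀ β₁ β₂ : V → ℕ, isRealSchurRoot K t h β₁ → isRealSchurRoot K t h β₂ →
      x = natZ β₁ → y = natZ β₂ → extMin K t h β₁ β₂ = 0) ∧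
    (∀ (β : V → ℕ) (i : V), isRealSchurRoot K t h β →
      x = natZ β → y = (fun j => -(gammaRoot t h i j : ℤ)) → β i = 0))

/-- The domain of semi-invariants `D(β) ⊆ ℚ^{Q_0}`. -/
def Dom (t h : A → V) (β : V → ℕ) : Set (V → ℚ) :=
  {x | eulerForm t h x (natQ β) = 0 ∧
    ∀ β' : V → ℕ, Embeds K t h β' β → eulerForm t h x (natQ β') ≤ 0}

/-- A quiver exceptional set: a subset of `Ψ(Q)_{≥ -1}` of the form
`{β_1,…,β_l, −γ_{i_{l+1}},…,−γ_{i_m}}` with `β_j(i_k) = 0` and whose real-Schur-root part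
can be ordered into a quiver exceptional sequence. -/
def IsQExcSet (t h : A → V) (E : Finset (V → ℤ)) : Prop :=
  ∃ (l m : ℕ) (b : Fin l → V → ℕ) (g : Fin m → V),
    Function.Injective b ∧ Function.Injective g ∧ IsQES K t h b ∧
    (∀ j k, b j (g k) = 0) ∧
    (E : Set (V → ℤ)) =
      (Set.range fun j => natZ (b j)) ∪
      (Set.range fun k => (fun v => -(gammaRoot t h (g k) v : ℤ)))


/-- The underlying graph of the quiver is connected. -/
def IsConnectedQuiver (t h : A → V) : Prop :=
  ∀ i j : V,
    Relation.ReflTransGen (fun u v => ∃ a, (t a = u ∧ h a = v) ∨ (t a = v ∧ h a = u)) i j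

/-- Morphisms of representations. -/
structure RepHom {K : Type} [Field K] {V A : Type} {t h : A → V}
    (X Y : QuivRep K V A t h) : Type where
  app : ∀ i, X.sp i →ₗ[K] Y.sp i
  comm : ∀ a : A, (app (h a)).comp (X.map a) = (Y.map a).comp (app (t a))

namespace RepHom

variable {K₀ : Type} [Field K₀] {t h : A → V}

/-- The identity morphism. -/
def idHom (X : QuivRep K₀ V A t h) : RepHom X X :=
  ⟨fun _ => LinearMap.id, fun a => by ext x; simp⟩

/-- Composition of morphisms. -/
def comp {X Y Z : QuivRep K₀ V A t h} (f : RepHom X Y) (g : RepHom Y Z) : RepHom X Z :=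
  ⟨fun i => (g.app i).comp (f.app i), fun a => by
    ext x
    have hf := LinearMap.congr_fun (f.comm a) x
    have hg := LinearMap.congr_fun (g.comm a) (f.app (t a) x)
    simp only [LinearMap.comp_apply] at hf hg ⊢
    rw [hf, hg]⟩

/-- Sum of morphisms. -/
def add {X Y : QuivRep K₀ V A t h} (f g : RepHom X Y) : RepHom X Y :=
  ⟨fun i => f.app i + g.app i, fun a => by
    simp only [LinearMap.add_comp, LinearMap.comp_add, f.comm a, g.comm a]⟩

/-- Scalar multiple of a morphism. -/
def smul {X Y : QuivRep K₀ V A t h} (c : K₀) (f : RepHom X Y) : RepHom X Y :=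
  ⟨fun i => c • f.app i, fun a => by
    simp only [LinearMap.smul_comp, LinearMap.comp_smul, f.comm a]⟩

end RepHom

/-- The number of arrows `i → j` in the Ext-quiver `Q(𝓔)` of a sequence of dimension
vectors: `−⟨β_i, β_j⟩` for `i ≠ j`. -/
def extMult (t h : A → V) {l : ℕ} (b : Fin l → V → ℕ) (i j : Fin l) : ℕ :=
  if i = j then 0 else (-(eulerForm t h (natZ (b i)) (natZ (b j)))).toNat

/-- The arrow set of the Ext-quiver `Q(𝓔)`. -/
abbrev ExtArrow (t h : A → V) {l : ℕ} (b : Fin l → V → ℕ) : Type :=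
  (i : Fin l) × (j : Fin l) × Fin (extMult t h b i j)

/-- The representation space `rep(Q,β)` as a product of matrix spaces. -/
abbrev RepSpace (t h : A → V) (β : V → ℕ) : Type :=
  ∀ a : A, Matrix (Fin (β (h a))) (Fin (β (t a))) K

/-- The (base-change) action of `GL(β)` on `rep(Q,β)`. -/
def glAct (t h : A → V) {β : V → ℕ}
    (g : ∀ i, Matrix.GeneralLinearGroup (Fin (β i)) K) (W : RepSpace K t h β) :
    RepSpace K t h β :=
  fun a => (g (h a) : Matrix (Fin (β (h a))) (Fin (β (h a))) K) * W a *
    (((g (t a))⁻¹ : Matrix.GeneralLinearGroup (Fin (β (t a))) K) :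
      Matrix (Fin (β (t a))) (Fin (β (t a))) K)

/-- A polynomial function on `rep(Q,β)`. -/
def IsPolyFun (t h : A → V) {β : V → ℕ} (f : RepSpace K t h β → K) : Prop :=
  ∃ P : MvPolynomial ((a : A) × (Fin (β (h a)) × Fin (β (t a)))) K,
    ∀ W, f W = MvPolynomial.eval (fun x => W x.1 x.2.1 x.2.2) P

/-- The weight space `SI(Q,β)_σ` of semi-invariant polynomial functions of weight `σ`. -/
def SIweight (t h : A → V) (β : V → ℕ) (σ : V → ℤ) :
    Submodule K (RepSpace K t h β → K) where
  carrier := {f | IsPolyFun K t h f ∧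
    ∀ (g : ∀ i, Matrix.GeneralLinearGroup (Fin (β i)) K) (W : RepSpace K t h β),
      f (glAct K t h g W) =
        (((∏ i, (Matrix.GeneralLinearGroup.det (g i)) ^ σ i : Kˣ) : K)) * f W}
  zero_mem' := by
    refine ⟨⟨0, by simp⟩, by simp⟩
  add_mem' := by
    rintro f g ⟨⟨P, hP⟩, hf⟩ ⟨⟨Q, hQ⟩, hg⟩
    refine ⟨⟨P + Q, fun W => ?_⟩, fun gg W => ?_⟩
    · simp [hP W, hQ W]
    · simp only [Pi.add_apply, hf gg W, hg gg W]; ring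
  smul_mem' := by
    rintro c f ⟨⟨P, hP⟩, hf⟩
    refine ⟨⟨MvPolynomial.C c * P, fun W => ?_⟩, fun gg W => ?_⟩
    · simp [hP W]
    · simp only [Pi.smul_apply, hf gg W, smul_eq_mul]; ring

/-- Entry of a matrix accessed through natural-number indices. -/
def entryN {m n : ℕ} (M : Matrix (Fin m) (Fin n) K) (r c : ℕ) : K :=
  if hr : r < m then (if hc : c < n then M ⟨r, hr⟩ ⟨c, hc⟩ else 0) else 0

/-- The matrix of the map `d^V_W` (with `V` of dimension vector `α` varying and `W` of
dimension vector `w` fixed), in the standard bases. -/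
def schofieldMatrix (t h : A → V) {α w : V → ℕ}
    (Vm : RepSpace K t h α) (W : RepSpace K t h w) :
    Matrix ((a : A) × (Fin (w (h a)) × Fin (α (t a)))) ((i : V) × (Fin (w i) × Fin (α i))) K :=
  fun r c =>
    (if c.1 = h r.1 ∧ (c.2.1 : ℕ) = (r.2.1 : ℕ) then
      entryN K (Vm r.1) (c.2.2 : ℕ) (r.2.2 : ℕ) else 0)
    - (if c.1 = t r.1 ∧ (c.2.2 : ℕ) = (r.2.2 : ℕ) then
      entryN K (W r.1) (r.2.1 : ℕ) (c.2.1 : ℕ) else 0)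

/-- The Schofield semi-invariant `c_W : rep(Q,α) → K`, `V ↦ det d^V_W` (defined when
`⟨α, dim W⟩ = 0`, i.e. when `d^V_W` is a square matrix). -/
def schofieldSI (t h : A → V) {α w : V → ℕ} (W : RepSpace K t h w)
    (Vm : RepSpace K t h α) : K :=
  if hc : Fintype.card ((i : V) × (Fin (w i) × Fin (α i))) =
      Fintype.card ((a : A) × (Fin (w (h a)) × Fin (α (t a)))) then
    ((schofieldMatrix K t h Vm W).submatrix (Fintype.equivOfCardEq hc) id).det
  else 0

/-- The representation of `Q` attached to a point of `rep(Q,β)`. -/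
def toRep (t h : A → V) {β : V → ℕ} (W : RepSpace K t h β) : QuivRep K V A t h where
  sp i := Fin (β i) → K
  map a := Matrix.mulVecLin (W a)

/-!
Subrepresentations of dimension vector `γ` are the points of a quiver Grassmannian, which is
projective, so that the representations of dimension vector `β` having one form a closed set. Hence
finitely many `γ ≤ β` with `¬ γ ↪ β` can be avoided simultaneously: some representation `W` has only
subrepresentations whose dimension vector embeds in `β`. The condition on the `β' ↪ β` then says
that `W` is `σ`-semi-stable.

It suffices to know closedness along lines `c ↦ W c` in the representation space. If `W c`
has a `γ`-subrepresentation for all `c` in an infinite set `S`, these together give one over the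
ring `K^S`, into which `K[X]` embeds by evaluation, hence one over a field containing `K[X]`. By
the valuative criterion it extends to a valuation ring dominating the point `X = c₀`, and reducing
modulo the maximal ideal gives one of `W c₀` over an extension field of `K`. By the Nullstellensatz
`W c₀` then has one over `K` itself.
-/

universe u

theorem det_mul_eq_sum_det_submatrix {m n R : Type*} [Fintype m] [Fintype n] [DecidableEq n]
    [CommRing R] (P : Matrix n m R) (N : Matrix m n R) :
    (P * N).det = ∑ f : n → m, (∏ j, P j (f j)) * (N.submatrix f id).det := by
  classical
  have hrows : P * N = fun j => ∑ i, P j i • N i := by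
    ext j l
    simp [Matrix.mul_apply]
  calc (P * N).det
      = ∑ f : n → m, Matrix.detRowAlternating fun j => P j (f j) • N (f j) := by
        rw [hrows]
        exact Matrix.detRowAlternating.toMultilinearMap.map_sum fun j i => P j i • N i
    _ = _ := Finset.sum_congr rfl fun f _ =>
        Matrix.detRowAlternating.map_smul_univ (fun j => P j (f j)) fun j => N (f j)

theorem exists_det_submatrix_ne_zero {m n R : Type*} [Fintype m] [Fintype n] [DecidableEq n]
    [CommRing R] [Nontrivial R] {P : Matrix n m R} {N : Matrix m n R} (hPN : P * N = 1) :
    ∃ f : n → m, (N.submatrix f id).det ≠ 0 := by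
  by_contra! hzero
  have hdet : (P * N).det = 0 := by
    rw [det_mul_eq_sum_det_submatrix]
    exact Finset.sum_eq_zero fun f _ => by rw [hzero f, mul_zero]
  rw [hPN, Matrix.det_one] at hdet
  exact one_ne_zero hdet

theorem mul_inv_submatrix_apply {m n L : Type*} [Fintype n] [DecidableEq n] [Field L]
    (N : Matrix m n L) {f : n → m} (hf : (N.submatrix f id).det ≠ 0) (i : m) (j : n) :
    (N * (N.submatrix f id)⁻¹) i j =
      (N.submatrix (Function.update f j i) id).det / (N.submatrix f id).det := by
  have hupdate : (N.submatrix f id).updateRow j (N i) =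
      N.submatrix (Function.update f j i) id := by
    ext x y
    by_cases hx : x = j
    · subst hx; simp
    · simp [hx]
  rw [eq_div_iff hf, mul_comm, ← hupdate, ← Matrix.cramer_transpose_apply,
    ← Matrix.det_smul_inv_vecMul_eq_cramer_transpose _ _ hf.isUnit]
  rfl

theorem one_submatrix_mul {l m n R : Type*} [Fintype m] [DecidableEq m] [NonAssocSemiring R]
    (f : l → m) (N : Matrix m n R) :
    (1 : Matrix m m R).submatrix f id * N = N.submatrix f id := by
  ext i j
  simp [Matrix.mul_apply, Matrix.one_apply]

/-- The selected square block is one whose determinant has maximal valuation, which makes all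
the other minors integral relative to it. -/
theorem exists_integral_mul_inv_submatrix {O L m n : Type*} [CommRing O] [IsDomain O]
    [ValuationRing O] [Field L] [Algebra O L] [IsFractionRing O L] [Fintype m] [Fintype n]
    [DecidableEq n] {P : Matrix n m L} {N : Matrix m n L} (hPN : P * N = 1) :
    ∃ f : n → m, (N.submatrix f id).det ≠ 0 ∧
      ∃ N' : Matrix m n O, N'.map (algebraMap O L) = N * (N.submatrix f id)⁻¹ := by
  classical
  let v := ValuationRing.valuation O L
  obtain ⟨f₀, hf₀⟩ := exists_det_submatrix_ne_zero hPN
  have : Nonempty (n → m) := ⟨f₀⟩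
  obtain ⟨f, hmax⟩ := Finite.exists_max fun f : n → m => v (N.submatrix f id).det
  have hf : (N.submatrix f id).det ≠ 0 := by
    rw [← v.pos_iff] at hf₀ ⊢
    exact hf₀.trans_le (hmax f₀)
  have hint : ∀ i j, ∃ x : O, algebraMap O L x = (N * (N.submatrix f id)⁻¹) i j := by
    intro i j
    rw [← ValuationRing.mem_integer_iff, Valuation.mem_integer_iff,
      mul_inv_submatrix_apply N hf, map_div₀]
    exact div_le_one_of_le₀ (hmax _) zero_le
  choose N' hN' using hint
  exact ⟨f, hf, N', Matrix.ext hN'⟩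

theorem exists_integral_columns {O L m n : Type*} [CommRing O] [IsDomain O]
    [ValuationRing O] [Field L] [Algebra O L] [IsFractionRing O L] [Fintype m] [Fintype n]
    [DecidableEq n] {P : Matrix n m L} {N : Matrix m n L} (hPN : P * N = 1) :
    ∃ (N' : Matrix m n O) (P' : Matrix n m O) (G : Matrix n n L), P' * N' = 1 ∧
      N'.map (algebraMap O L) = N * G ∧
      N'.map (algebraMap O L) * P'.map (algebraMap O L) * N = N := by
  classical
  obtain ⟨f, hf, N', hN'⟩ := exists_integral_mul_inv_submatrix (O := O) hPN
  refine ⟨N', (1 : Matrix m m O).submatrix f id, (N.submatrix f id)⁻¹, ?_, hN', ?_⟩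
  · apply Matrix.map_injective (IsFractionRing.injective O L)
    calc ((1 : Matrix m m O).submatrix f id * N').map (algebraMap O L)
        = (N'.map (algebraMap O L)).submatrix f id := by rw [one_submatrix_mul]; rfl
      _ = N.submatrix f id * (N.submatrix f id)⁻¹ := by rw [hN']; rfl
      _ = 1 := Matrix.mul_nonsing_inv _ hf.isUnit
      _ = (1 : Matrix n n O).map (algebraMap O L) := by simp
  · calc N'.map (algebraMap O L) * ((1 : Matrix m m O).submatrix f id).map (algebraMap O L) * N
        = N * (N.submatrix f id)⁻¹ * N.submatrix f id := by
          rw [hN', ← Matrix.submatrix_map, Matrix.map_one _ (map_zero _) (map_one _),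
            Matrix.mul_assoc, one_submatrix_mul]
      _ = N := by rw [Matrix.mul_assoc, Matrix.nonsing_inv_mul _ hf.isUnit, Matrix.mul_one]

/-- A representation of the quiver `(t, h)` with dimension vector `β` over a commutative ring,
in coordinates. Over a field this is a point of `RepSpace`; other rings are needed to speak of
families of representations and of their specializations. -/
abbrev MatrixRep {ι α : Type*} (R : Type*) (t h : α → ι) (β : ι → ℕ) : Type _ :=
  ∀ a : α, Matrix (Fin (β (h a))) (Fin (β (t a))) R

namespace MatrixRep

variable {ι α : Type*} {t h : α → ι} {β γ : ι → ℕ}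
variable {R S T : Type*} [CommRing R] [CommRing S] [CommRing T]

/-- Base change of a representation in coordinates along a ring homomorphism. -/
def map (W : MatrixRep R t h β) (f : R →+* S) : MatrixRep S t h β :=
  fun a => (W a).map f

theorem map_map (W : MatrixRep R t h β) (f : R →+* S) (g : S →+* T) :
    (W.map f).map g = W.map (g.comp f) :=
  rfl

/-- `W.HasSplitSubrep γ`: the representation `W` has a subrepresentation with dimension vector `γ`
which at each vertex `i` is free and a direct summand, i.e. a point of the quiver Grassmannian.
The columns of `N i` are a basis of the summand and `N i * P i` is a projection onto it. -/
def HasSplitSubrep (W : MatrixRep R t h β) (γ : ι → ℕ) : Prop :=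
  ∃ (N : ∀ i, Matrix (Fin (β i)) (Fin (γ i)) R) (P : ∀ i, Matrix (Fin (γ i)) (Fin (β i)) R),
    (∀ i, P i * N i = 1) ∧ ∀ a, N (h a) * P (h a) * (W a * N (t a)) = W a * N (t a)

namespace HasSplitSubrep

theorem map {W : MatrixRep R t h β} (hW : W.HasSplitSubrep γ) (f : R →+* S) :
    (W.map f).HasSplitSubrep γ := by
  obtain ⟨N, P, hPN, hinv⟩ := hW
  refine ⟨fun i => (N i).map f, fun i => (P i).map f, fun i => ?_, fun a => ?_⟩
  · rw [← Matrix.map_mul, hPN, Matrix.map_one _ f.map_zero f.map_one]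
  · simp only [MatrixRep.map, ← Matrix.map_mul, hinv]

theorem pi {J : Type*} {R : J → Type*} [∀ j, CommRing (R j)] {W : MatrixRep (∀ j, R j) t h β}
    (hW : ∀ j, (W.map (Pi.evalRingHom R j)).HasSplitSubrep γ) : W.HasSplitSubrep γ := by
  choose N P hPN hinv using hW
  refine ⟨fun i => .of fun x y j => N j i x y, fun i => .of fun x y j => P j i x y,
    fun i => ?_, fun a => ?_⟩
  · ext x y j
    have := congrFun₂ (hPN j i) x y
    simp only [Matrix.mul_apply, Matrix.one_apply] at this
    simp only [Matrix.mul_apply, Finset.sum_apply, Matrix.one_apply, Pi.mul_apply,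
        Matrix.of_apply, this]
    split_ifs <;> rfl
  · ext x y j
    have := congrFun₂ (hinv j a) x y
    simpa [Matrix.mul_apply, MatrixRep.map] using this

/-- The valuative criterion of properness for the quiver Grassmannian. -/
theorem of_isFractionRing {O L : Type*} [CommRing O] [IsDomain O] [ValuationRing O]
    [Field L] [Algebra O L] [IsFractionRing O L] {W : MatrixRep O t h β}
    (hW : (W.map (algebraMap O L)).HasSplitSubrep γ) : W.HasSplitSubrep γ := by
  obtain ⟨N, P, hPN, hinv⟩ := hW
  choose N' P' G hPN' hN' hproj using fun i => exists_integral_columns (O := O) (hPN i)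
  refine ⟨N', P', hPN', fun a => ?_⟩
  apply Matrix.map_injective (IsFractionRing.injective O L)
  have hcol : (W a).map (algebraMap O L) * (N' (t a)).map (algebraMap O L) =
      N (h a) * (P (h a) * ((W a).map (algebraMap O L) * N (t a)) * G (t a)) := by
    rw [hN', ← Matrix.mul_assoc, ← Matrix.mul_assoc (N (h a)), ← Matrix.mul_assoc (N (h a))]
    exact congrArg (· * G (t a)) (hinv a).symm
  simp only [Matrix.map_mul]
  rw [hcol, ← Matrix.mul_assoc _ (N (h a)), hproj]

end HasSplitSubrep

end MatrixRep

theorem exists_valuationSubring_of_injective {R L : Type*} [CommRing R] [Field L] {φ : R →+* L}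
    (hφ : Function.Injective φ) {I : Ideal R} (hI : I ≠ ⊤) :
    ∃ (O : ValuationSubring L) (ψ : R →+* O), O.subtype.comp ψ = φ ∧
      I ≤ (IsLocalRing.maximalIdeal O).comap ψ := by
  let e : R ≃+* φ.range := .ofBijective φ.rangeRestrict
    ⟨fun x y hxy => hφ (congrArg Subtype.val hxy), φ.rangeRestrict_surjective⟩
  have hI' : I.comap (e.symm : φ.range →+* R) ≠ ⊤ := Ideal.comap_ne_top _ hI
  obtain ⟨O, hle, hnonunits⟩ := Ideal.image_subset_nonunits_valuationSubring _ hI'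
  refine ⟨O, φ.codRestrict O.toSubring fun x => hle ⟨x, rfl⟩, rfl, fun x hx => ?_⟩
  have hxO : φ x ∈ (O.nonunits : Set L) := hnonunits ⟨e x, by simpa using hx, rfl⟩
  rw [← O.image_maximalIdeal] at hxO
  obtain ⟨y, hy, hyx⟩ := hxO
  have hyψ : y = φ.codRestrict O.toSubring (fun x => hle ⟨x, rfl⟩) x := Subtype.ext hyx
  exact Ideal.mem_comap.2 (hyψ ▸ hy)

theorem exists_field_comp_injective {R : Type*} {B : Type u} [CommRing R] [IsDomain R] [CommRing B]
    {φ : R →+* B} (hφ : Function.Injective φ) :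
    ∃ (L : Type u) (_ : Field L) (π : B →+* L), Function.Injective (π.comp φ) := by
  obtain ⟨p, _, hp⟩ := Ideal.exists_comap_eq_of_mem_minimalPrimes_of_injective hφ ⊥
    (by simp [IsDomain.minimalPrimes_eq_singleton_bot])
  refine ⟨p.ResidueField, inferInstance, algebraMap B p.ResidueField, ?_⟩
  rw [RingHom.injective_iff_ker_eq_bot, ← RingHom.comap_ker, Ideal.ker_algebraMap_residueField, hp]

theorem nonempty_algHom_of_finiteType {k B : Type*} [Field k] [IsAlgClosed k] [CommRing B]
    [Nontrivial B] [Algebra k B] [Algebra.FiniteType k B] : Nonempty (B →ₐ[k] k) := by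
  obtain ⟨m, hm⟩ := Ideal.exists_maximal B
  let _ : Field (B ⧸ m) := Ideal.Quotient.field m
  have : Module.Finite k (B ⧸ m) := finite_of_finite_type_of_isJacobsonRing k (B ⧸ m)
  exact ⟨(IsAlgClosed.lift : (B ⧸ m) →ₐ[k] k).comp (Ideal.Quotient.mkₐ k m)⟩

namespace MatrixRep

variable {ι α : Type*} {t h : α → ι} {β γ : ι → ℕ}

namespace HasSplitSubrep

theorem exists_specialization {R : Type*} {B : Type u} [CommRing R] [IsDomain R] [CommRing B]
    {φ : R →+* B} (hφ : Function.Injective φ) {W : MatrixRep R t h β}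
    (hW : (W.map φ).HasSplitSubrep γ) {I : Ideal R} (hI : I ≠ ⊤) :
    ∃ (F : Type u) (_ : Field F) (ψ : R →+* F), I ≤ RingHom.ker ψ ∧
      (W.map ψ).HasSplitSubrep γ := by
  obtain ⟨L, _, π, hπ⟩ := exists_field_comp_injective hφ
  obtain ⟨O, ψ, hψ, hIψ⟩ := exists_valuationSubring_of_injective hπ hI
  have hL : ((W.map ψ).map (algebraMap O L)).HasSplitSubrep γ := by
    have := hW.map π
    rw [map_map, ← hψ] at this
    exact this
  refine ⟨IsLocalRing.ResidueField O, inferInstance, (IsLocalRing.residue O).comp ψ, ?_,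
    hL.of_isFractionRing.map (IsLocalRing.residue O)⟩
  rwa [← RingHom.comap_ker, IsLocalRing.ker_residue]

theorem exists_fg_subalgebra [Finite ι] {k B : Type*} [CommRing k] [CommRing B] [Algebra k B]
    {W : MatrixRep k t h β} (hW : (W.map (algebraMap k B)).HasSplitSubrep γ) :
    ∃ B₀ : Subalgebra k B, B₀.FG ∧ (W.map (algebraMap k B₀)).HasSplitSubrep γ := by
  obtain ⟨N, P, hPN, hinv⟩ := hW
  let entries : Set B := ⋃ i, (Set.range fun p : Fin (β i) × Fin (γ i) => N i p.1 p.2) ∪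
    Set.range fun p : Fin (γ i) × Fin (β i) => P i p.1 p.2
  have hentries : entries.Finite :=
    Set.finite_iUnion fun i => (Set.finite_range _).union (Set.finite_range _)
  let B₀ : Subalgebra k B := Algebra.adjoin k entries
  have hN : ∀ i x y, N i x y ∈ B₀ := fun i x y =>
    Algebra.subset_adjoin (Set.mem_iUnion.2 ⟨i, .inl ⟨(x, y), rfl⟩⟩)
  have hP : ∀ i x y, P i x y ∈ B₀ := fun i x y =>
    Algebra.subset_adjoin (Set.mem_iUnion.2 ⟨i, .inr ⟨(x, y), rfl⟩⟩)
  let N₀ (i : ι) : Matrix (Fin (β i)) (Fin (γ i)) B₀ := .of fun x y => ⟨N i x y, hN i x y⟩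
  let P₀ (i : ι) : Matrix (Fin (γ i)) (Fin (β i)) B₀ := .of fun x y => ⟨P i x y, hP i x y⟩
  have hval : Function.Injective B₀.val := Subtype.val_injective
  refine ⟨B₀, Subalgebra.fg_def.2 ⟨entries, hentries, rfl⟩, N₀, P₀, fun i => ?_, fun a => ?_⟩
  · apply Matrix.map_injective hval
    simp only [Matrix.map_mul, Matrix.map_one _ (map_zero B₀.val) (map_one B₀.val)]
    exact hPN i
  · apply Matrix.map_injective hval
    simp only [Matrix.map_mul]
    exact hinv a

theorem of_algebraMap [Finite ι] {k B : Type*} [Field k] [IsAlgClosed k] [CommRing B]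
    [Nontrivial B] [Algebra k B] {W : MatrixRep k t h β}
    (hW : (W.map (algebraMap k B)).HasSplitSubrep γ) : W.HasSplitSubrep γ := by
  obtain ⟨B₀, hfg, hB₀⟩ := hW.exists_fg_subalgebra
  have : Algebra.FiniteType k B₀ := B₀.fg_iff_finiteType.1 hfg
  obtain ⟨f⟩ := nonempty_algHom_of_finiteType (k := k) (B := B₀)
  have := hB₀.map (f : B₀ →+* k)
  rwa [map_map, f.comp_algebraMap] at this

theorem eval_of_infinite [Finite ι] {k : Type*} [Field k] [IsAlgClosed k]
    {W : MatrixRep (Polynomial k) t h β}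
    (hW : {c : k | (W.map (Polynomial.evalRingHom c)).HasSplitSubrep γ}.Infinite) (c₀ : k) :
    (W.map (Polynomial.evalRingHom c₀)).HasSplitSubrep γ := by
  set S := {c : k | (W.map (Polynomial.evalRingHom c)).HasSplitSubrep γ}
  let φ : Polynomial k →+* (S → k) := RingHom.pi fun c => Polynomial.evalRingHom (c : k)
  have hφ : Function.Injective φ := fun p q hpq =>
    p.eq_of_infinite_eval_eq q (hW.mono fun c hc => congrFun hpq ⟨c, hc⟩)
  have hS : (W.map φ).HasSplitSubrep γ := .pi fun c => c.2
  obtain ⟨F, _, ψ, hker, hψ⟩ := hS.exists_specialization hφ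
    (RingHom.ker_ne_top (Polynomial.evalRingHom c₀))
  let _ : Algebra k F := (ψ.comp Polynomial.C).toAlgebra
  have hfactor : ψ = (algebraMap k F).comp (Polynomial.evalRingHom c₀) := by
    refine RingHom.ext fun p => sub_eq_zero.1 ?_
    have hp : ψ (p - Polynomial.C (p.eval c₀)) = 0 := hker (by simp [RingHom.mem_ker])
    rwa [map_sub] at hp
  rw [hfactor, ← map_map] at hψ
  exact hψ.of_algebraMap

theorem of_infinite_lineMap [Finite ι] {k : Type*} [Field k] [IsAlgClosed k]
    {X Y : MatrixRep k t h β}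
    (hXY : {c : k | HasSplitSubrep (AffineMap.lineMap X Y c : MatrixRep k t h β) γ}.Infinite) :
    X.HasSplitSubrep γ := by
  let W : MatrixRep (Polynomial k) t h β := fun a =>
    (X a).map Polynomial.C + (Polynomial.X : Polynomial k) • (Y a - X a).map Polynomial.C
  have hW : ∀ c, W.map (Polynomial.evalRingHom c) = AffineMap.lineMap X Y c := by
    intro c
    ext a x y
    simp [W, MatrixRep.map, AffineMap.lineMap_apply, add_comm]
  simpa only [hW, AffineMap.lineMap_apply_zero] using
    eval_of_infinite (W := W) (by simpa only [hW] using hXY) 0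

end HasSplitSubrep

end MatrixRep

theorem exists_forall_notMem_of_finite_lineMap {k E J : Type*} [Field k] [Infinite k]
    [AddCommGroup E] [Module k E] {s : Finset J} {Z : J → Set E}
    (hZ : ∀ j ∈ s, ∀ x ∉ Z j, ∀ y, {c : k | AffineMap.lineMap x y c ∈ Z j}.Finite)
    (hne : ∀ j ∈ s, ∃ x, x ∉ Z j) : ∃ x, ∀ j ∈ s, x ∉ Z j := by
  classical
  induction s using Finset.induction_on with
  | empty => exact ⟨0, by simp⟩
  | insert j s _ ih =>
    obtain ⟨x, hx⟩ := ih (fun i hi => hZ i (Finset.mem_insert_of_mem hi))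
      fun i hi => hne i (Finset.mem_insert_of_mem hi)
    obtain ⟨y, hy⟩ := hne j (Finset.mem_insert_self j s)
    have hj : {c : k | AffineMap.lineMap x y c ∈ Z j}.Finite := by
      refine ((hZ j (Finset.mem_insert_self j s) y hy x).preimage
        (f := fun c => 1 - c) sub_right_injective.injOn).subset fun c hc => ?_
      simpa only [Set.mem_preimage, Set.mem_ofPred_eq, AffineMap.lineMap_apply_one_sub] using hc
    have hs : (⋃ i ∈ s, {c : k | AffineMap.lineMap x y c ∈ Z i}).Finite :=
      s.finite_toSet.biUnion fun i hi => hZ i (Finset.mem_insert_of_mem hi) x (hx i hi) y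
    obtain ⟨c, hc⟩ := (hj.union hs).exists_notMem
    simp only [Set.mem_union, Set.mem_iUnion, Set.mem_ofPred_eq, not_or, not_exists] at hc
    exact ⟨AffineMap.lineMap x y c, (Finset.forall_mem_insert ..).2 hc⟩

section ExistsSubEmbeds

variable {k : Type} [Field k] {ι α : Type} {t h : α → ι} {β γ : ι → ℕ}

namespace QuivRep

/-- The coordinates of a representation with respect to a choice of bases. -/
def toMatrixRep (X : QuivRep k ι α t h) (b : ∀ i, Module.Basis (Fin (β i)) k (X.sp i)) :
    MatrixRep k t h β :=
  fun a => LinearMap.toMatrix (b (t a)) (b (h a)) (X.map a)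

theorem exists_sub_of_hasSplitSubrep {X : QuivRep k ι α t h}
    {b : ∀ i, Module.Basis (Fin (β i)) k (X.sp i)} (hX : (X.toMatrixRep b).HasSplitSubrep γ) :
    ∃ U : Sub X, U.dimVec = γ := by
  obtain ⟨N, P, hPN, hinv⟩ := hX
  let e := fun i => Pi.basisFun k (Fin (γ i))
  let n := fun i => Matrix.toLin (e i) (b i) (N i)
  have hinj : ∀ i, Function.Injective (n i) := fun i =>
    Function.LeftInverse.injective (g := Matrix.toLin (b i) (e i) (P i)) fun x => by
      rw [← LinearMap.comp_apply, ← Matrix.toLin_mul, hPN, Matrix.toLin_one, LinearMap.id_apply]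
  have hcomm : ∀ a, n (h a) ∘ₗ Matrix.toLin (e (t a)) (e (h a))
      (P (h a) * (X.toMatrixRep b a * N (t a))) = X.map a ∘ₗ n (t a) := by
    intro a
    rw [← Matrix.toLin_mul, ← Matrix.mul_assoc, hinv, Matrix.toLin_mul _ (b (t a)), toMatrixRep,
      Matrix.toLin_toMatrix]
  refine ⟨⟨fun i => LinearMap.range (n i), ?_⟩, funext fun i => ?_⟩
  · rintro a _ ⟨x, rfl⟩
    exact ⟨_, LinearMap.congr_fun (hcomm a) x⟩
  · simpa [Sub.dimVec] using LinearMap.finrank_range_of_inj (hinj i)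

theorem Sub.hasSplitSubrep {X : QuivRep k ι α t h} (U : Sub X)
    (b : ∀ i, Module.Basis (Fin (β i)) k (X.sp i)) :
    (X.toMatrixRep b).HasSplitSubrep U.dimVec := by
  let u : ∀ i, Module.Basis (Fin (U.dimVec i)) k (U.sub i) := fun i =>
    Module.finBasis k (U.sub i)
  choose r hr using fun i => (U.sub i).subtype.exists_leftInverse_of_injective (U.sub i).ker_subtype
  refine ⟨fun i => LinearMap.toMatrix (u i) (b i) (U.sub i).subtype,
    fun i => LinearMap.toMatrix (b i) (u i) (r i), fun i => ?_, fun a => ?_⟩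
  · rw [← LinearMap.toMatrix_comp, hr, LinearMap.toMatrix_id]
  · simp only [toMatrixRep, ← LinearMap.toMatrix_comp]
    congr 1
    ext x
    exact congrArg Subtype.val
      (LinearMap.congr_fun (hr (h a)) ⟨X.map a x, U.le a x x.2⟩)

theorem Sub.dimVec_le {X : QuivRep k ι α t h} (U : Sub X) : U.dimVec ≤ X.dimVec :=
  fun i => (U.sub i).finrank_le

end QuivRep

theorem dimVec_toRep (W : RepSpace k t h β) : (toRep k t h W).dimVec = β :=
  funext fun _ => Module.finrank_fin_fun k

theorem toMatrixRep_toRep (W : RepSpace k t h β) :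
    (toRep k t h W).toMatrixRep (fun i => Pi.basisFun k (Fin (β i))) = W :=
  funext fun a => LinearMap.toMatrix'_toLin' (W a)

theorem Embeds.of_forall_hasSplitSubrep
    (hW : ∀ W : RepSpace k t h β, MatrixRep.HasSplitSubrep W γ) : Embeds k t h γ β := fun X hX =>
  QuivRep.exists_sub_of_hasSplitSubrep
    (hW (X.toMatrixRep fun i => Module.finBasisOfFinrankEq k (X.sp i) (congrFun hX i)))

theorem exists_forall_sub_embeds [IsAlgClosed k] [Finite ι] (t h : α → ι) (β : ι → ℕ) :
    ∃ X : QuivRep k ι α t h, X.dimVec = β ∧ ∀ U : QuivRep.Sub X, Embeds k t h U.dimVec β := by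
  classical
  have : Fintype ι := Fintype.ofFinite ι
  have : Infinite k := IsAlgClosed.instInfinite
  obtain ⟨W, hW⟩ := exists_forall_notMem_of_finite_lineMap (k := k)
    (s := (Finset.Iic β).filter fun γ => ¬ Embeds k t h γ β)
    (Z := fun γ => {W : RepSpace k t h β | MatrixRep.HasSplitSubrep W γ})
    (fun γ _ X hX Y => by_contra fun hXY => hX (.of_infinite_lineMap hXY))
    (fun γ hγ => not_forall.1 fun hall =>
      (Finset.mem_filter.1 hγ).2 (.of_forall_hasSplitSubrep hall))
  refine ⟨toRep k t h W, dimVec_toRep W, fun U => by_contra fun hU => hW U.dimVec ?_ ?_⟩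
  · have hle := U.dimVec_le
    rw [dimVec_toRep] at hle
    exact Finset.mem_filter.2 ⟨Finset.mem_Iic.2 hle, hU⟩
  · have := U.hasSplitSubrep fun i => Pi.basisFun k (Fin (β i))
    rwa [toMatrixRep_toRep] at this

theorem stmt0_general [IsAlgClosed k] [Fintype ι] (t h : α → ι) (β : ι → ℕ) (σ : ι → ℤ) :
    (∃ W : QuivRep k ι α t h, W.dimVec = β ∧ IsSemistable k σ W) ↔
      ((∑ i, σ i * (β i : ℤ)) = 0 ∧
        ∀ β' : ι → ℕ, Embeds k t h β' β → (∑ i, σ i * (β' i : ℤ)) ≤ 0) := by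
  constructor
  · rintro ⟨W, rfl, hzero, hsub⟩
    refine ⟨hzero, fun β' hβ' => ?_⟩
    obtain ⟨U, rfl⟩ := hβ' W rfl
    exact hsub U
  · rintro ⟨hzero, hembeds⟩
    obtain ⟨W, rfl, hW⟩ := exists_forall_sub_embeds (k := k) t h β
    exact ⟨W, rfl, hzero, fun U => hembeds U.dimVec (hW U)⟩

end ExistsSubEmbeds

/-- There exists a `σ`-semi-stable representation of dimension vector `β`
iff `σ(β) = 0` and `σ(β') ≤ 0` for every `β' ↪ β`. -/
theorem stmt0 [IsAlgClosed K] [CharZero K] (t h : A → V) (hQ : Acyclic t h)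
    (β : V → ℕ) (σ : V → ℤ) :
    (∃ W : QuivRep K V A t h, W.dimVec = β ∧ IsSemistable K σ W) ↔
      ((∑ i, σ i * (β i : ℤ)) = 0 ∧
        ∀ β' : V → ℕ, Embeds K t h β' β → (∑ i, σ i * (β' i : ℤ)) ≤ 0) :=
  stmt0_general t h β σ

end
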